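/- arXiv:1303.7328 — 5 statements merged into one kernel-verified Lean document; each statement's English description precedes it below -/
import Mathlib

section
/- Let ≈ be a congruence on L.Term α and Γ a set of terms. Then Γ ⊢ M in System 𝒩 if and only if there exists a term N ∈ cl(Γ) with M ≈ N. (Hence the intruder deduction problem for System 𝒩 is equivalent to the elementary deduction problem: Γ ⊢ M iff M ≈ C[M_1,…,M_k] for some L-context C and terms M_1,…,M_k ∈ Γ.) -/
open FirstOrder

variable {L : Language} {α : Type*}

/-- `r` is a congruence: an equivalence relation compatible with all function symbols. -/
structure IsCongruence (L : Language) (α : Type*) (r : L.Term α → L.Term α → Prop) : Prop where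
  equiv : Equivalence r
  compat : ∀ {n : ℕ} (f : L.Functions n) (Ms Ns : Fin n → L.Term α),
      (∀ i, r (Ms i) (Ns i)) → r (Language.Term.func f Ms) (Language.Term.func f Ns)

/-- System 𝒩: the intruder deduction relation `Γ ⊢ M` modulo the equational relation `r`. -/
inductive Deduce (r : L.Term α → L.Term α → Prop) (Γ : Set (L.Term α)) : L.Term α → Prop
  | id {M : L.Term α} : M ∈ Γ → Deduce r Γ M
  | fI {n : ℕ} (f : L.Functions n) (Ms : Fin n → L.Term α) :
      (∀ i, Deduce r Γ (Ms i)) → Deduce r Γ (Language.Term.func f Ms)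
  | eq {M N : L.Term α} : Deduce r Γ N → r M N → Deduce r Γ M

/-- The context closure `cl(Γ)`: the smallest set containing `Γ` and closed under the
function symbols of `L`; its members are exactly the terms `C[M₁,…,Mₖ]` for an `L`-context
`C` and `M₁,…,Mₖ ∈ Γ`. -/
inductive ContextClosure (Γ : Set (L.Term α)) : L.Term α → Prop
  | mem {M : L.Term α} : M ∈ Γ → ContextClosure Γ M
  | func {n : ℕ} (f : L.Functions n) (Ms : Fin n → L.Term α) :
      (∀ i, ContextClosure Γ (Ms i)) → ContextClosure Γ (Language.Term.func f Ms)

/-- A precongruence: a preorder on terms compatible with all function symbols, such as the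
reachability relation of a rewriting system, where a congruence would also be symmetric. -/
structure IsPrecongruence (r : L.Term α → L.Term α → Prop) : Prop where
  refl : ∀ M, r M M
  trans : ∀ {M N P}, r M N → r N P → r M P
  compat : ∀ {n : ℕ} (f : L.Functions n) (Ms Ns : Fin n → L.Term α),
      (∀ i, r (Ms i) (Ns i)) → r (Language.Term.func f Ms) (Language.Term.func f Ns)

section

variable {r : L.Term α → L.Term α → Prop} {Γ : Set (L.Term α)} {M : L.Term α}

theorem IsCongruence.isPrecongruence (hr : IsCongruence L α r) : IsPrecongruence r where
  refl := hr.equiv.refl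
  trans := hr.equiv.trans
  compat := hr.compat

theorem ContextClosure.deduce (hM : ContextClosure Γ M) : Deduce r Γ M := by
  induction hM with
  | mem hM => exact .id hM
  | func f Ms _ ih => exact .fI f Ms ih

/-- All uses of rule (≈) can be postponed to a single one at the end of the derivation:
compatibility moves it below (f_I), and transitivity merges consecutive uses. -/
theorem Deduce.exists_contextClosure (hr : IsPrecongruence r) (hM : Deduce r Γ M) :
    ∃ N, ContextClosure Γ N ∧ r M N := by
  induction hM with
  | id hM => exact ⟨_, .mem hM, hr.refl _⟩
  | fI f Ms _ ih =>
    choose Ns hNs hMN using ih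
    exact ⟨_, .func f Ns hNs, hr.compat f Ms Ns hMN⟩
  | eq _ hMN ih =>
    obtain ⟨P, hP, hNP⟩ := ih
    exact ⟨P, hP, hr.trans hMN hNP⟩

theorem deduce_iff_exists_contextClosure_general (hr : IsPrecongruence r) :
    Deduce r Γ M ↔ ∃ N, ContextClosure Γ N ∧ r M N :=
  ⟨Deduce.exists_contextClosure hr, fun ⟨_, hN, hMN⟩ => .eq hN.deduce hMN⟩

end

/-- IDP for System 𝒩 is equivalent to EDP: `Γ ⊢ M` iff `M ≈ N` for some `N ∈ cl(Γ)`. -/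
theorem deduce_iff_exists_contextClosure
    (r : L.Term α → L.Term α → Prop) (hr : IsCongruence L α r)
    (Γ : Set (L.Term α)) (M : L.Term α) :
    Deduce r Γ M ↔ ∃ N, ContextClosure Γ N ∧ r M N :=
  deduce_iff_exists_contextClosure_general hr.isPrecongruence
end

section
/- Let ≈ be a congruence on L.Term α, and let Γ and Δ be sets of terms. If Γ ⊢ A in System 𝒩 for every A ∈ Δ, and Δ ⊢ M in System 𝒩, then Γ ⊢ M in System 𝒩 (admissibility of cut for the intruder deduction system 𝒩). -/
open FirstOrder

variable {L : Language} {α : Type*}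

theorem deduce_cut_general {r : L.Term α → L.Term α → Prop} {Γ Δ : Set (L.Term α)}
    {M : L.Term α} (hΔ : ∀ A ∈ Δ, Deduce r Γ A) (hM : Deduce r Δ M) : Deduce r Γ M := by
  induction hM with
  | id mem => exact hΔ _ mem
  | fI f Ms _ ih => exact .fI f Ms ih
  | eq _ rel ih => exact .eq ih rel

/-- Admissibility of cut for System 𝒩: if every member of `Δ` is deducible from `Γ`, and
`M` is deducible from `Δ`, then `M` is deducible from `Γ`. -/
theorem deduce_cut
    (r : L.Term α → L.Term α → Prop) (hr : IsCongruence L α r)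
    (Γ Δ : Set (L.Term α)) (M : L.Term α)
    (hΔ : ∀ A ∈ Δ, Deduce r Γ A) (hM : Deduce r Δ M) :
    Deduce r Γ M :=
  deduce_cut_general hΔ hM
end

section
/- Let ≈ be a congruence on L.Term α, Γ a set of terms, and S a set of terms (a saturation of Γ) such that Γ ⊆ S and Γ ⊢ A in System 𝒩 for every A ∈ S. Then Γ ⊢ M in System 𝒩 if and only if there exists N ∈ cl(S) with M ≈ N; i.e., M is deducible from Γ if and only if M is ≈-equal to an L-context applied to terms of the saturated set S. -/
open FirstOrder

variable {L : Language} {α : Type*}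

theorem ContextClosure.deduce_s2 {r : L.Term α → L.Term α → Prop} {Γ S : Set (L.Term α)}
    (hS : ∀ A ∈ S, Deduce r Γ A) {N : L.Term α} (hN : ContextClosure S N) : Deduce r Γ N := by
  induction hN with
  | mem hA => exact hS _ hA
  | func f Ns _ ih => exact .fI f Ns ih

theorem Deduce.exists_contextClosure_s2 {r : L.Term α → L.Term α → Prop} [IsTrans (L.Term α) r]
    (hcompat : ∀ {n : ℕ} (f : L.Functions n) (Ms Ns : Fin n → L.Term α),
      (∀ i, r (Ms i) (Ns i)) → r (Language.Term.func f Ms) (Language.Term.func f Ns))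
    {Γ S : Set (L.Term α)} (hΓ : ∀ A ∈ Γ, ∃ N, ContextClosure S N ∧ r A N)
    {M : L.Term α} (hM : Deduce r Γ M) : ∃ N, ContextClosure S N ∧ r M N := by
  induction hM with
  | id hA => exact hΓ _ hA
  | fI f Ms _ ih =>
    choose Ns hNs hMsNs using ih
    exact ⟨.func f Ns, .func f Ns hNs, hcompat f Ms Ns hMsNs⟩
  | eq _ hMM' ih =>
    obtain ⟨N, hN, hM'N⟩ := ih
    exact ⟨N, hN, _root_.trans hMM' hM'N⟩

theorem deduce_iff_exists_contextClosure_saturation_general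
    {r : L.Term α → L.Term α → Prop} [IsTrans (L.Term α) r]
    (hcompat : ∀ {n : ℕ} (f : L.Functions n) (Ms Ns : Fin n → L.Term α),
      (∀ i, r (Ms i) (Ns i)) → r (Language.Term.func f Ms) (Language.Term.func f Ns))
    {Γ S : Set (L.Term α)} (hΓ : ∀ A ∈ Γ, ∃ N, ContextClosure S N ∧ r A N)
    (hS : ∀ A ∈ S, Deduce r Γ A) (M : L.Term α) :
    Deduce r Γ M ↔ ∃ N, ContextClosure S N ∧ r M N :=
  ⟨fun hM ↦ hM.exists_contextClosure_s2 hcompat hΓ,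
    fun ⟨_, hN, hMN⟩ ↦ .eq (hN.deduce_s2 hS) hMN⟩

/-- If `S` is a saturation of `Γ` (i.e. `Γ ⊆ S` and every member of `S` is deducible from
`Γ`), then `Γ ⊢ M` iff `M` is `r`-equal to an `L`-context applied to terms of `S`. -/
theorem deduce_iff_exists_contextClosure_saturation
    (r : L.Term α → L.Term α → Prop) (hr : IsCongruence L α r)
    (Γ S : Set (L.Term α)) (hΓS : Γ ⊆ S) (hS : ∀ A ∈ S, Deduce r Γ A)
    (M : L.Term α) :
    Deduce r Γ M ↔ ∃ N, ContextClosure S N ∧ r M N := by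
  have : IsTrans (L.Term α) r := ⟨fun _ _ _ ↦ hr.equiv.trans⟩
  exact deduce_iff_exists_contextClosure_saturation_general hr.compat
    (fun A hA ↦ ⟨A, .mem (hΓS hA), hr.equiv.refl A⟩) hS M
end

section
/- Let r be a strongly normalizing and confluent binary relation on a type α, and let P be a predicate on α such that whenever P x and r x y, there exists z with r^* y z and P z (any one-step reduct of an element satisfying P reduces further to an element satisfying P). Then for all x and T, if P x, r^* x T, and T is r-normal, then P T. (Abstract form of the passage from one-step closeness of saturated-context representations to their preservation at normal forms.) -/
/-!
Termination alone produces some normal form of `x` satisfying `P`: as long as an element satisfying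
`P` is not normal, take a step and then reduce further to an element satisfying `P` again.
Confluence makes the normal form of `x` unique, so it is `T`.
-/

open Relation Function

section

variable {α : Type*} {r : α → α → Prop} {P : α → Prop} {x s t : α}

theorem eq_of_join_reflTransGen_of_normal (hst : Join (ReflTransGen r) s t)
    (hs : ∀ u, ¬ r s u) (ht : ∀ u, ¬ r t u) : s = t := by
  obtain ⟨w, hsw, htw⟩ := hst
  exact ((reflTransGen_iff_eq hs).mp hsw).symm.trans ((reflTransGen_iff_eq ht).mp htw)

theorem exists_reflTransGen_normal_pred (hacc : Acc (swap r) x)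
    (hP : ∀ x y, P x → r x y → ∃ z, ReflTransGen r y z ∧ P z) (hx : P x) :
    ∃ s, ReflTransGen r x s ∧ (∀ u, ¬ r s u) ∧ P s := by
  -- The next element satisfying `P` may be several steps away.
  replace hacc : Acc (TransGen (swap r)) x := hacc.transGen
  induction hacc with
  | intro x _ ih =>
    by_cases hnormal : ∀ u, ¬ r x u
    · exact ⟨x, .refl, hnormal, hx⟩
    · push Not at hnormal
      obtain ⟨y, hxy⟩ := hnormal
      obtain ⟨z, hyz, hz⟩ := hP x y hx hxy
      have hxz : TransGen r x z := .head' hxy hyz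
      obtain ⟨s, hzs, hs, hPs⟩ := ih z (transGen_swap.mpr hxz) hz
      exact ⟨s, hxz.to_reflTransGen.trans hzs, hs, hPs⟩

theorem pred_of_reflTransGen_of_normal_general (hacc : Acc (swap r) x)
    (hconf : ∀ y z, ReflTransGen r x y → ReflTransGen r x z → Join (ReflTransGen r) y z)
    (hP : ∀ x y, P x → r x y → ∃ z, ReflTransGen r y z ∧ P z)
    (hx : P x) (hxt : ReflTransGen r x t) (ht : ∀ u, ¬ r t u) : P t := by
  obtain ⟨s, hxs, hs, hPs⟩ := exists_reflTransGen_normal_pred hacc hP hx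
  exact eq_of_join_reflTransGen_of_normal (hconf s t hxs hxt) hs ht ▸ hPs

end

/-- Abstract form of the passage from one-step closeness of saturated-context
representations to their preservation at normal forms: if `r` is strongly normalizing and
confluent, and any one-step reduct of an element satisfying `P` reduces further to an
element satisfying `P`, then `P` holds at any `r`-normal form of an element satisfying `P`. -/
theorem pred_of_reflTransGen_of_normal {α : Type*} (r : α → α → Prop)
    (hSN : WellFounded (fun a b => r b a))
    (hconf : ∀ x y z, Relation.ReflTransGen r x y → Relation.ReflTransGen r x z →
      ∃ w, Relation.ReflTransGen r y w ∧ Relation.ReflTransGen r z w)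
    (P : α → Prop)
    (hP : ∀ x y, P x → r x y → ∃ z, Relation.ReflTransGen r y z ∧ P z) :
    ∀ x T, P x → Relation.ReflTransGen r x T → (∀ u, ¬ r T u) → P T :=
  fun x _ => pred_of_reflTransGen_of_normal_general (hSN.apply x) (hconf x) hP
end

section
/- For every term M : FreeMagma α, the AC-equivalence class {N : FreeMagma α | N ≈_AC M} is a finite set. (This finiteness is what makes the saturated set sat(Γ) of the pure AC theory, which is closed modulo AC, a finite set.) -/
variable {α : Type*}

/-- AC-equivalence on terms of the pure AC theory over a single binary operator `⊕`
(the multiplication of `FreeMagma α`): the smallest equivalence relation containing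
commutativity and associativity and compatible with the operator. -/
inductive ACEquiv : FreeMagma α → FreeMagma α → Prop
  | comm (M N : FreeMagma α) : ACEquiv (M * N) (N * M)
  | assoc (M N P : FreeMagma α) : ACEquiv (M * (N * P)) ((M * N) * P)
  | refl (M : FreeMagma α) : ACEquiv M M
  | symm {M N : FreeMagma α} : ACEquiv M N → ACEquiv N M
  | trans {M N P : FreeMagma α} : ACEquiv M N → ACEquiv N P → ACEquiv M P
  | mul_congr {M M' N N' : FreeMagma α} :
      ACEquiv M M' → ACEquiv N N' → ACEquiv (M * N) (M' * N')

/-- The multiset of leaves (atomic arguments) of a term of the pure AC theory. -/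
def leaves : FreeMagma α → Multiset α
  | FreeMagma.of a => {a}
  | FreeMagma.mul M N => leaves M + leaves N

/-!
Commutativity and associativity rearrange the leaves of a term without changing their multiset, so
it suffices that only finitely many terms have their leaves within a given multiset. Every term has
a leaf, so both factors of a product have strictly fewer leaves than the product, and finiteness
follows by well-founded induction on multisets, each of which has only finitely many submultisets.
-/

@[simp]
theorem leaves_of (a : α) : leaves (FreeMagma.of a) = {a} :=
  rfl

@[simp]
theorem leaves_mul (M N : FreeMagma α) : leaves (M * N) = leaves M + leaves N :=
  rfl

theorem leaves_pos (M : FreeMagma α) : 0 < leaves M := by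
  induction M with
  | ih1 a =>
    rw [leaves_of]
    exact pos_of_ne_zero (Multiset.singleton_ne_zero a)
  | ih2 M N hM hN =>
    rw [leaves_mul]
    exact add_pos hM hN

theorem leaves_lt_leaves_mul_right (M N : FreeMagma α) : leaves M < leaves (M * N) := by
  rw [leaves_mul]
  exact lt_add_of_pos_right (leaves M) (leaves_pos N)

theorem leaves_lt_leaves_mul_left (M N : FreeMagma α) : leaves N < leaves (M * N) := by
  rw [leaves_mul]
  exact lt_add_of_pos_left (leaves N) (leaves_pos M)

theorem finite_setOf_leaves_le (s : Multiset α) : {N : FreeMagma α | leaves N ≤ s}.Finite := by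
  classical
  induction s using WellFoundedLT.induction with
  | ind s ih =>
    have finite_lt : {N : FreeMagma α | leaves N < s}.Finite :=
      ((Set.finite_Iio s).biUnion ih).subset fun N hN => Set.mem_biUnion hN (le_refl (leaves N))
    have finite_of : (FreeMagma.of '' {a | a ∈ s}).Finite := s.finite_toSet.image FreeMagma.of
    have finite_mul := finite_lt.image2 (· * ·) finite_lt
    refine (finite_of.union finite_mul).subset fun N (hN : leaves N ≤ s) => ?_
    cases N using FreeMagma.recOnMul with
    | ih1 a =>
      rw [leaves_of, Multiset.singleton_le] at hN
      exact Or.inl ⟨a, hN, rfl⟩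
    | ih2 P Q =>
      have hP : leaves P < s := (leaves_lt_leaves_mul_right P Q).trans_le hN
      have hQ : leaves Q < s := (leaves_lt_leaves_mul_left P Q).trans_le hN
      exact Or.inr ⟨P, hP, Q, hQ, rfl⟩

theorem ACEquiv.leaves_eq {M N : FreeMagma α} (h : ACEquiv M N) : leaves M = leaves N := by
  induction h with
  | comm M N => simp only [leaves_mul, add_comm]
  | assoc M N P => simp only [leaves_mul, add_assoc]
  | refl M => rfl
  | symm _ ih => exact ih.symm
  | trans _ _ ihMN ihNP => exact ihMN.trans ihNP
  | mul_congr _ _ ihM ihN => simp only [leaves_mul, ihM, ihN]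

/-- The AC-equivalence class of any term of the pure AC theory is a finite set. -/
theorem acEquiv_class_finite (M : FreeMagma α) :
    {N : FreeMagma α | ACEquiv N M}.Finite :=
  (finite_setOf_leaves_le (leaves M)).subset fun _ hN => hN.leaves_eq.le
end
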